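/- Let n ≥ 3 be odd, let A ∈ M_n(T) be an invertible tropical matrix whose underlying permutation is an n-cycle σ (A_{ij} ≠ -∞ iff j = σ(i)), and let B ∈ M_n(T) be an invertible diagonal matrix (B_{ij} ≠ -∞ iff i = j). Then A²B² = B²A² if and only if B is a tropical scaling of the identity matrix, i.e., all diagonal entries of B are equal. -/

import Mathlib

/-- The tropical (max-plus) semiring `ℝ ∪ {-∞}`: `⊥` is `-∞`,
`Finset.sup` is tropical sum (max), `+` is tropical product. -/
abbrev Trop := WithBot ℝ

/-- Tropical (max-plus) matrix multiplication: `(X*Y) i j = max_k (X i k + Y k j)`. -/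
def tmul {ι : Type*} [Fintype ι] (X Y : Matrix ι ι Trop) : Matrix ι ι Trop :=
  fun i j => Finset.univ.sup fun k => X i k + Y k j

/-- The tropical identity matrix: `0` on the diagonal, `-∞` elsewhere. -/
def tId (ι : Type*) [DecidableEq ι] : Matrix ι ι Trop :=
  fun i j => if i = j then (0 : Trop) else ⊥

/-- Upper triangular tropical matrices: `-∞` below the diagonal. -/
def IsUT {n : ℕ} (X : Matrix (Fin n) (Fin n) Trop) : Prop :=
  ∀ i j : Fin n, (j : ℕ) < (i : ℕ) → X i j = ⊥

/-- Evaluation of a word over the alphabet `{a, b}` (encoded as `Bool`,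
with `a = true`, `b = false`) at matrices `X, Y` (substituting `a ↦ X`, `b ↦ Y`),
using tropical matrix multiplication. -/
def evalWord {ι : Type*} [Fintype ι] [DecidableEq ι] (w : List Bool)
    (X Y : Matrix ι ι Trop) : Matrix ι ι Trop :=
  (w.map fun c => if c then X else Y).foldr tmul (tId ι)

/-- Substitution of words into a word: `subst w x y = w[x, y]`
(replace each `a = true` by the word `x` and each `b = false` by `y`). -/
def subst (w x y : List Bool) : List Bool :=
  w.flatMap fun c => if c then x else y

/-!
Multiplying by a diagonal matrix `D` adds `D i i` to row `i`, or `D j j` to column `j`, so `M`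
commutes with `D` exactly when `D i i = D j j` along every edge `i → j` of the digraph of
finite entries of `M`. For `M = A²` these edges include `i → σ² i`. As `n` is odd, `σ²` is again an
`n`-cycle, so commuting forces the diagonal of `B²`, and hence that of `B`, to be constant.
-/

/-- A tropical diagonal matrix: every off-diagonal entry is `-∞`. Diagonal entries may be `-∞` too,
so invertibility is not part of the notion. `Matrix.IsDiag` does not express this, since the `0` of
`Trop` is the real number zero. -/
def IsTropDiagonal {ι : Type*} (D : Matrix ι ι Trop) : Prop :=
  ∀ ⦃i j⦄, i ≠ j → D i j = ⊥

section TropicalProduct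

variable {ι : Type*} [Fintype ι] {D M X Y : Matrix ι ι Trop}

theorem le_tmul_apply (X Y : Matrix ι ι Trop) (i k j : ι) : X i k + Y k j ≤ tmul X Y i j :=
  Finset.le_sup (f := fun k => X i k + Y k j) (Finset.mem_univ k)

theorem tmul_apply_eq_of_forall_ne {i j k : ι} (h : ∀ l, l ≠ k → X i l + Y l j = ⊥) :
    tmul X Y i j = X i k + Y k j := by
  refine le_antisymm (Finset.sup_le fun l _ => ?_) (le_tmul_apply X Y i k j)
  obtain rfl | hl := eq_or_ne l k
  · exact le_rfl
  · exact (h l hl).trans_le bot_le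

theorem tmul_apply_ne_bot {i j k : ι} (hX : X i k ≠ ⊥) (hY : Y k j ≠ ⊥) : tmul X Y i j ≠ ⊥ :=
  ne_bot_of_le_ne_bot (WithBot.add_ne_bot.2 ⟨hX, hY⟩) (le_tmul_apply X Y i k j)

namespace IsTropDiagonal

theorem tmul_apply_left (hD : IsTropDiagonal D) (M : Matrix ι ι Trop) (i j : ι) :
    tmul D M i j = D i i + M i j :=
  tmul_apply_eq_of_forall_ne fun l hl => by rw [hD hl.symm, WithBot.bot_add]

theorem tmul_apply_right (hD : IsTropDiagonal D) (M : Matrix ι ι Trop) (i j : ι) :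
    tmul M D i j = M i j + D j j :=
  tmul_apply_eq_of_forall_ne fun l hl => by rw [hD hl, WithBot.add_bot]

theorem mul (hX : IsTropDiagonal X) (hY : IsTropDiagonal Y) : IsTropDiagonal (tmul X Y) :=
  fun i j hij => by rw [hX.tmul_apply_left, hY hij, WithBot.add_bot]

theorem tmul_comm_iff (hD : IsTropDiagonal D) :
    tmul M D = tmul D M ↔ ∀ i j, M i j ≠ ⊥ → D i i = D j j := by
  simp only [← Matrix.ext_iff, hD.tmul_apply_left, hD.tmul_apply_right]
  refine forall₂_congr fun i j => ?_
  by_cases hM : M i j = ⊥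
  · simp [hM]
  · rw [add_comm, WithBot.add_right_inj hM, eq_comm, imp_iff_right hM]

end IsTropDiagonal

end TropicalProduct

theorem withBot_add_self_inj {G : Type*} [AddMonoid G] [IsAddTorsionFree G] {x y : WithBot G} :
    x + x = y + y ↔ x = y := by
  have add_self_inj (a b : G) : a + a = b + b ↔ a = b := by
    rw [← two_nsmul, ← two_nsmul, nsmul_right_inj two_ne_zero]
  induction x <;> induction y <;> simp [← WithBot.coe_add, add_self_inj]

section Cycles

variable {α β : Type*} {σ : Equiv.Perm α}

theorem isCycleOn_support [Fintype α] [DecidableEq α] (hσ : σ.IsCycle) :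
    σ.IsCycleOn σ.support := by
  rw [Equiv.Perm.coe_support_eq_set_support]
  exact hσ.isCycleOn

theorem isCycleOn_pow_of_coprime {s : Finset α} (hσ : σ.IsCycleOn s) {k : ℕ}
    (hk : k.Coprime s.card) : (σ ^ k).IsCycleOn s := by
  refine ⟨hσ.1.perm_pow k, fun a ha b hb => ?_⟩
  obtain ⟨m, -, rfl⟩ := hσ.exists_pow_eq ha hb
  obtain ⟨l, hl_dvd, hl_mod⟩ := Nat.chineseRemainder hk 0 m
  obtain ⟨q, rfl⟩ := Nat.modEq_zero_iff_dvd.1 hl_dvd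
  refine ⟨q, ?_⟩
  rw [zpow_natCast, ← pow_mul]
  exact (hσ.pow_apply_eq_pow_apply ha).2 hl_mod

theorem apply_eq_of_sameCycle {f : α → β} (hf : ∀ a, f (σ a) = f a) {a b : α}
    (hab : σ.SameCycle a b) : f a = f b := by
  obtain ⟨m, rfl⟩ := hab
  induction m with
  | zero => rw [zpow_zero, Equiv.Perm.one_apply]
  | succ m ih => rw [ih, add_comm, zpow_one_add, Equiv.Perm.mul_apply, hf]
  | pred m ih => rw [ih, ← hf ((σ ^ (-(m : ℤ) - 1)) a), ← Equiv.Perm.mul_apply, ← zpow_one_add,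
      add_sub_cancel]

end Cycles

theorem stmt10_general {ι : Type*} [Fintype ι] (hodd : Odd (Fintype.card ι))
    (A B : Matrix ι ι Trop) (σ : Equiv.Perm ι) (hσ : σ.IsCycleOn (Finset.univ : Finset ι))
    (hA : ∀ i, A i (σ i) ≠ ⊥) (hB : IsTropDiagonal B) :
    tmul (tmul A A) (tmul B B) = tmul (tmul B B) (tmul A A) ↔ ∃ c : Trop, ∀ i, B i i = c := by
  have hcomm : tmul (tmul A A) (tmul B B) = tmul (tmul B B) (tmul A A) ↔
      ∀ i j, tmul A A i j ≠ ⊥ → B i i = B j j := by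
    simp only [(hB.mul hB).tmul_comm_iff, hB.tmul_apply_left, withBot_add_self_inj]
  rw [hcomm]
  constructor
  · intro hedge
    have hinv (i : ι) : B ((σ ^ 2) i) ((σ ^ 2) i) = B i i :=
      (hedge i _ (tmul_apply_ne_bot (hA i) (hA (σ i)))).symm
    have hcyc : (σ ^ 2).IsCycleOn (Finset.univ : Finset ι) :=
      isCycleOn_pow_of_coprime hσ hodd.coprime_two_left
    obtain ⟨i₀⟩ := Fintype.card_pos_iff.1 hodd.pos
    exact ⟨B i₀ i₀, fun i => apply_eq_of_sameCycle (f := fun i => B i i) hinv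
      (hcyc.2 (Finset.mem_univ i) (Finset.mem_univ i₀))⟩
  · rintro ⟨c, hc⟩ i j -
    rw [hc, hc]

/-- Let `n ≥ 3` be odd, `A` an invertible tropical matrix whose underlying
permutation is an `n`-cycle `σ`, and `B` an invertible diagonal tropical matrix.
Then `A²B² = B²A²` iff `B` is a tropical scaling of the identity. -/
theorem stmt10 (n : ℕ) (hn : 3 ≤ n) (hodd : Odd n)
    (A B : Matrix (Fin n) (Fin n) Trop) (σ : Equiv.Perm (Fin n))
    (hcyc : σ.IsCycle) (hsupp : σ.support = Finset.univ)
    (hA : ∀ i j : Fin n, A i j ≠ ⊥ ↔ j = σ i)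
    (hB : ∀ i j : Fin n, B i j ≠ ⊥ ↔ i = j) :
    tmul (tmul A A) (tmul B B) = tmul (tmul B B) (tmul A A) ↔
      ∃ c : ℝ, ∀ i : Fin n, B i i = (c : Trop) := by
  have hdiag : IsTropDiagonal B := fun i j hij => not_not.1 (mt (hB i j).1 hij)
  have hbot : ¬∀ i, B i i = ⊥ := fun h => (hB ⟨0, by omega⟩ _).2 rfl (h _)
  rw [stmt10_general (by rwa [Fintype.card_fin]) A B σ
    (hsupp ▸ isCycleOn_support hcyc) (fun i => (hA i _).2 rfl) hdiag,
    WithBot.exists, or_iff_right hbot]
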